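/- Let $N\ge 1$ be an integer, let $\theta>0$, $\delta>\theta$ and $0<\gamma<1$. For $\varepsilon\in(0,\min(1,\delta-\theta))$ set $T_\varepsilon:=\ln\frac{\delta-\theta}{\varepsilon}$ and $L_\varepsilon:=\gamma\sqrt{T_\varepsilon\ln\frac{1}{\varepsilon}}$, and for $t>0$ define $A_{L_\varepsilon}(t):=(4\pi)^{-N/2}\int_{\{x\in\mathbb{R}^N:|x|<L_\varepsilon/\sqrt t\}}e^{-|x|^2/4}dx$. Then there exists $\varepsilon_0>0$ such that for every $\varepsilon\in(0,\varepsilon_0)$ one has $1+\frac{\varepsilon}{\theta}<\int_0^{T_\varepsilon}\frac{e^{-s}}{A_{L_\varepsilon}(s)}\,ds+\frac{e^{-T_\varepsilon}}{A_{L_\varepsilon}(T_\varepsilon)}$. -/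

import Mathlib

open MeasureTheory Real Set

/-!
Write `f s = 1 / A_L(s)`, which is nondecreasing in `s` and at least `1`. If `S` is an exponential
random variable of rate one, the right-hand side of (2.8) is the expectation of `f (min S T)`, so
for `a ≤ T` it is at least `1 + (f a - 1) e^{-a}`. The Gaussian tail beyond radius `L / √a`
bounds `f a - 1` from below by about `e^{-L²/(4a)}`, and the best choice `a = L / 2` turns the gain
`(f a - 1) e^{-a}` into `C e^{-L - √(2L)}`. For `L = L_ε ∼ γ ln (1/ε)` with `γ < 1` this decays
like `ε ^ (γ + o(1))`, hence eventually dominates `ε / θ`.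
-/

open Filter Topology Module

section HeatBallMass

variable (E : Type*) [NormedAddCommGroup E] [InnerProductSpace ℝ E] [FiniteDimensional ℝ E]
  [MeasurableSpace E] [BorelSpace E]

theorem integral_exp_neg_sq_norm_div_four :
    ∫ x : E, exp (-‖x‖ ^ 2 / 4) = (4 * π) ^ ((finrank ℝ E : ℝ) / 2) := by
  have gaussian := GaussianFourier.integral_rexp_neg_mul_sq_norm (V := E) (b := 1 / 4) (by norm_num)
  convert gaussian using 4 <;> ring

theorem integrable_exp_neg_sq_norm_div_four : Integrable fun x : E ↦ exp (-‖x‖ ^ 2 / 4) := by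
  refine .of_integral_ne_zero ?_
  rw [integral_exp_neg_sq_norm_div_four]
  positivity

/-- The mass that the heat kernel of `E` at time `1` gives to the ball of radius `r` about the
origin. By parabolic scaling, the quantity `A_l(t)` is `heatBallMass E (l / √t)`, the value at the
origin and at time `t` of the heat flow started from the indicator function of the ball of
radius `l`. -/
noncomputable def heatBallMass (r : ℝ) : ℝ :=
  1 / (4 * π) ^ ((finrank ℝ E : ℝ) / 2) * ∫ x in {x : E | ‖x‖ < r}, exp (-‖x‖ ^ 2 / 4)

theorem heatBallMass_mono : Monotone (heatBallMass E) := fun _ _ hrs ↦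
  mul_le_mul_of_nonneg_left
    (setIntegral_mono_set (integrable_exp_neg_sq_norm_div_four E).integrableOn
      (.of_forall fun _ ↦ (exp_pos _).le) (.of_forall fun _ hx ↦ lt_of_lt_of_le hx hrs))
    (by positivity)

theorem heatBallMass_le_one (r : ℝ) : heatBallMass E r ≤ 1 := by
  have ball_le : ∫ x in {x : E | ‖x‖ < r}, exp (-‖x‖ ^ 2 / 4) ≤ ∫ x : E, exp (-‖x‖ ^ 2 / 4) :=
    setIntegral_le_integral (integrable_exp_neg_sq_norm_div_four E)
      (.of_forall fun _ ↦ (exp_pos _).le)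
  rw [integral_exp_neg_sq_norm_div_four] at ball_le
  rw [heatBallMass, one_div_mul_eq_div]
  exact div_le_one_of_le₀ ball_le (by positivity)

variable {E}

theorem heatBallMass_pos {r : ℝ} (hr : 0 < r) : 0 < heatBallMass E r := by
  have : NeZero (volume.restrict {x : E | ‖x‖ < r}) := by
    rw [← ball_zero_eq]
    exact ⟨Measure.restrict_eq_zero.not.2 (Metric.measure_ball_pos _ _ hr).ne'⟩
  exact mul_pos (by positivity)
    (integral_exp_pos (integrable_exp_neg_sq_norm_div_four E).integrableOn)

theorem measureReal_ball_mul_exp_le_setIntegral_ball (c : E) (ρ : ℝ) :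
    volume.real (Metric.ball (0 : E) ρ) * exp (-(‖c‖ + ρ) ^ 2 / 4) ≤
      ∫ x in Metric.ball c ρ, exp (-‖x‖ ^ 2 / 4) := by
  rw [Measure.real, ← Measure.addHaar_ball_center volume c ρ, ← Measure.real, mul_comm]
  refine setIntegral_ge_of_const_le_real measurableSet_ball measure_ball_lt_top.ne (fun x hx ↦ ?_)
    (integrable_exp_neg_sq_norm_div_four E).integrableOn
  have norm_le : ‖x‖ ≤ ‖c‖ + ρ := by
    linarith [norm_sub_norm_le x c, mem_ball_iff_norm.1 hx]
  gcongr

variable (E) in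
theorem exists_heatBallMass_le_one_sub [Nontrivial E] :
    ∃ C > 0, ∀ r, 0 ≤ r → heatBallMass E r ≤ 1 - C * exp (-(r + 2) ^ 2 / 4) := by
  set K : ℝ := (4 * π) ^ ((finrank ℝ E : ℝ) / 2) with hK
  have hKpos : 0 < K := by positivity
  set v := volume.real (Metric.ball (0 : E) 1)
  have hv : 0 < v :=
    ENNReal.toReal_pos (Metric.measure_ball_pos _ _ one_pos).ne' measure_ball_lt_top.ne
  refine ⟨v / K, by positivity, fun r hr ↦ ?_⟩
  obtain ⟨c, hc⟩ : ∃ c : E, ‖c‖ = r + 1 := exists_norm_eq E (by linarith)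
  have ball_disjoint : Metric.ball c 1 ⊆ {x : E | ‖x‖ < r}ᶜ := fun x hx ↦ by
    have norm_ge : r ≤ ‖x‖ := by linarith [norm_sub_norm_le c x, mem_ball_iff_norm'.1 hx]
    exact not_lt.2 norm_ge
  have integrable := integrable_exp_neg_sq_norm_div_four E
  have tail_ge : v * exp (-(r + 2) ^ 2 / 4) ≤ ∫ x in {x : E | ‖x‖ < r}ᶜ, exp (-‖x‖ ^ 2 / 4) :=
    calc
      _ = v * exp (-(‖c‖ + 1) ^ 2 / 4) := by rw [hc]; ring_nf
      _ ≤ ∫ x in Metric.ball c 1, exp (-‖x‖ ^ 2 / 4) :=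
        measureReal_ball_mul_exp_le_setIntegral_ball c 1
      _ ≤ _ := setIntegral_mono_set integrable.integrableOn
        (.of_forall fun _ ↦ (exp_pos _).le) (.of_forall ball_disjoint)
  have total := integral_add_compl (measurableSet_lt measurable_norm measurable_const :
    MeasurableSet {x : E | ‖x‖ < r}) integrable
  rw [integral_exp_neg_sq_norm_div_four, ← hK] at total
  calc heatBallMass E r
      ≤ 1 / K * (K - v * exp (-(r + 2) ^ 2 / 4)) := by
        rw [heatBallMass]
        gcongr
        linarith
    _ = 1 - v / K * exp (-(r + 2) ^ 2 / 4) := by field_simp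

theorem monotoneOn_inv_heatBallMass_div_sqrt {l : ℝ} (hl : 0 < l) :
    MonotoneOn (fun s ↦ (heatBallMass E (l / √s))⁻¹) (Ioi 0) := fun s (hs : 0 < s) _ ht hst ↦
  inv_anti₀ (heatBallMass_pos (div_pos hl (sqrt_pos.2 ht)))
    (heatBallMass_mono E (div_le_div_of_nonneg_left hl.le (sqrt_pos.2 hs) (sqrt_le_sqrt hst)))

end HeatBallMass

section ExponentialWeight

variable {f : ℝ → ℝ} {a b c T : ℝ}

theorem mul_exp_neg_sub_exp_neg_le_integral (hab : a ≤ b)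
    (hf : IntervalIntegrable (fun s ↦ exp (-s) * f s) volume a b) (hc : ∀ s ∈ Ioo a b, c ≤ f s) :
    c * (exp (-a) - exp (-b)) ≤ ∫ s in a..b, exp (-s) * f s := by
  have integral_exp_neg_mul_const : ∫ s in a..b, exp (-s) * c = c * (exp (-a) - exp (-b)) := by
    rw [intervalIntegral.integral_mul_const, intervalIntegral.integral_comp_neg (fun s ↦ exp s),
      integral_exp, mul_comm]
  rw [← integral_exp_neg_mul_const]
  refine intervalIntegral.integral_mono_on_of_le_Ioo hab
    (Continuous.intervalIntegrable (by fun_prop) a b) hf fun s hs ↦ ?_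
  gcongr
  exact hc s hs

theorem intervalIntegrable_exp_neg_mul_of_monotoneOn (hf : MonotoneOn f (Ioc 0 T))
    (hb : ∀ s ∈ Ioc 0 T, b ≤ f s) (hT : 0 ≤ T) :
    IntervalIntegrable (fun s ↦ exp (-s) * f s) volume 0 T := by
  rw [intervalIntegrable_iff_integrableOn_Ioc_of_le hT]
  have f_integrable : IntegrableOn f (Ioc 0 T) := by
    refine .of_bound (C := max |b| |f T|) measure_Ioc_lt_top
      (aemeasurable_restrict_of_monotoneOn measurableSet_Ioc hf).aestronglyMeasurable ?_
    refine (ae_restrict_iff' measurableSet_Ioc).2 (.of_forall fun s hs ↦ ?_)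
    exact abs_le_max_abs_abs (hb s hs) (hf hs ⟨hs.1.trans_le hs.2, le_rfl⟩ hs.2)
  refine f_integrable.bdd_mul (c := 1) (by fun_prop) ?_
  refine (ae_restrict_iff' measurableSet_Ioc).2 (.of_forall fun s hs ↦ ?_)
  rw [norm_of_nonneg (exp_pos _).le]
  exact exp_le_one_iff.2 (neg_nonpos.2 hs.1.le)

theorem le_integral_exp_neg_mul_add_of_monotoneOn (hf : MonotoneOn f (Ioc 0 T))
    (hb : ∀ s ∈ Ioc 0 T, b ≤ f s) (ha : 0 < a) (haT : a ≤ T) :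
    b + (f a - b) * exp (-a) ≤ (∫ s in Ioo 0 T, exp (-s) * f s) + exp (-T) * f T := by
  have hT : 0 < T := ha.trans_le haT
  have integrable := intervalIntegrable_exp_neg_mul_of_monotoneOn hf hb hT.le
  have a_mem : a ∈ uIcc 0 T := ⟨by simp [hT.le, ha.le], by simp [haT]⟩
  have integrable_left := integrable.mono_set (uIcc_subset_uIcc_left a_mem)
  have integrable_right := integrable.mono_set (uIcc_subset_uIcc_right a_mem)
  have apply_a_le : ∀ s, a ≤ s → s ≤ T → f a ≤ f s := fun s has hsT ↦
    hf ⟨ha, haT⟩ ⟨ha.trans_le has, hsT⟩ has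
  rw [← integral_Ioc_eq_integral_Ioo, ← intervalIntegral.integral_of_le hT.le,
    ← intervalIntegral.integral_add_adjacent_intervals integrable_left integrable_right]
  calc b + (f a - b) * exp (-a)
      = b * (exp (-0) - exp (-a)) + f a * (exp (-a) - exp (-T)) + exp (-T) * f a := by
        rw [neg_zero, exp_zero]
        ring
    _ ≤ _ := by
        gcongr
        · exact mul_exp_neg_sub_exp_neg_le_integral ha.le integrable_left
            fun s hs ↦ hb s ⟨hs.1, hs.2.le.trans haT⟩
        · exact mul_exp_neg_sub_exp_neg_le_integral haT integrable_right
            fun s hs ↦ apply_a_le s hs.1.le hs.2.le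
        · exact apply_a_le T haT le_rfl

end ExponentialWeight

section ExtinctionRadius

/-- The time `T_ε = ln (D / ε)`, with `D` standing for `δ - θ`, by which the supersolution of the
extinction argument is to fall below the threshold. -/
noncomputable def extinctionTime (D ε : ℝ) : ℝ := log (D / ε)

/-- The radius `L_ε = γ √(T_ε ln (1 / ε))` of the initial datum, with `D` standing for `δ - θ`. -/
noncomputable def extinctionRadius (γ D ε : ℝ) : ℝ := γ * √(extinctionTime D ε * log (1 / ε))

variable {γ D : ℝ}

theorem extinctionTime_pos {ε : ℝ} (hε : 0 < ε) (hεD : ε < D) : 0 < extinctionTime D ε :=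
  log_pos ((one_lt_div hε).2 hεD)

theorem extinctionRadius_pos {ε : ℝ} (hγ : 0 < γ) (hε : 0 < ε) (hε1 : ε < 1) (hεD : ε < D) :
    0 < extinctionRadius γ D ε :=
  mul_pos hγ (sqrt_pos.2 (mul_pos (extinctionTime_pos hε hεD) (log_pos ((one_lt_div hε).2 hε1))))

theorem extinctionTime_eq_add {ε : ℝ} (hD : 0 < D) (hε : 0 < ε) :
    extinctionTime D ε = log D + log (1 / ε) := by
  rw [extinctionTime, log_div hD.ne' hε.ne', one_div, log_inv, sub_eq_add_neg]

theorem tendsto_log_one_div_nhdsGT_zero : Tendsto (fun ε : ℝ ↦ log (1 / ε)) (𝓝[>] 0) atTop := by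
  simp only [one_div]
  exact tendsto_log_atTop.comp tendsto_inv_nhdsGT_zero

theorem eventually_extinctionRadius_le_mul_log {β : ℝ} (hγ : 0 ≤ γ) (hγβ : γ < β) (hD : 0 < D) :
    ∀ᶠ ε in 𝓝[>] 0, extinctionRadius γ D ε ≤ β * log (1 / ε) := by
  filter_upwards [self_mem_nhdsWithin,
    tendsto_log_one_div_nhdsGT_zero.eventually_ge_atTop (γ * log D / 2 / (β - γ)),
    tendsto_log_one_div_nhdsGT_zero.eventually_ge_atTop |log D|] with ε hε hlarge habs
  rw [extinctionRadius, extinctionTime_eq_add hD hε]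
  set Λ := log (1 / ε)
  have amgm : √((log D + Λ) * Λ) ≤ Λ + log D / 2 :=
    sqrt_le_iff.2 ⟨by linarith [neg_abs_le (log D), abs_nonneg (log D)],
      by nlinarith [sq_nonneg (log D)]⟩
  calc γ * √((log D + Λ) * Λ) ≤ γ * (Λ + log D / 2) := by gcongr
    _ ≤ β * Λ := by linarith [(div_le_iff₀ (sub_pos.2 hγβ)).1 hlarge]

theorem eventually_log_le_two_mul_extinctionTime (hD : 0 < D) :
    ∀ᶠ ε in 𝓝[>] 0, log (1 / ε) ≤ 2 * extinctionTime D ε := by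
  filter_upwards [self_mem_nhdsWithin,
    tendsto_log_one_div_nhdsGT_zero.eventually_ge_atTop (-2 * log D)] with ε hε hlarge
  rw [extinctionTime_eq_add hD hε]
  linarith

theorem tendsto_mul_sub_mul_sqrt_atTop {k : ℝ} (hk : 0 < k) (c : ℝ) :
    Tendsto (fun x ↦ k * x - c * √x) atTop atTop := by
  have factored : Tendsto (fun x ↦ √x * (k * √x - c)) atTop atTop :=
    tendsto_sqrt_atTop.atTop_mul_atTop₀
      (tendsto_atTop_add_const_right _ (-c) (tendsto_sqrt_atTop.const_mul_atTop hk))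
  refine factored.congr' ?_
  filter_upwards [eventually_ge_atTop 0] with x hx
  linear_combination k * mul_self_sqrt hx

theorem eventually_mul_exp_neg_lt_mul_exp_neg {β C : ℝ} (hβ : β < 1) (hC : 0 < C) (K : ℝ) :
    ∀ᶠ x in atTop, K * exp (-x) < C * exp (-(β * x + √(2 * (β * x)))) := by
  have gap_tendsto := tendsto_exp_atTop.comp
    (tendsto_mul_sub_mul_sqrt_atTop (sub_pos.2 hβ) √(2 * β))
  filter_upwards [gap_tendsto.eventually_gt_atTop (K / C), eventually_ge_atTop 0] with x hx hx0
  calc K * exp (-x) < exp ((1 - β) * x - √(2 * β) * √x) * C * exp (-x) := by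
        gcongr
        exact (div_lt_iff₀ hC).1 hx
    _ = C * exp (-(β * x + √(2 * (β * x)))) := by
        rw [mul_comm _ C, mul_assoc, ← exp_add, ← mul_assoc 2, sqrt_mul' _ hx0]
        ring_nf

theorem eventually_mul_lt_mul_exp_neg_extinctionRadius {C : ℝ} (hγ0 : 0 ≤ γ) (hγ1 : γ < 1)
    (hD : 0 < D) (hC : 0 < C) (K : ℝ) :
    ∀ᶠ ε in 𝓝[>] 0,
      K * ε < C * exp (-(extinctionRadius γ D ε + √(2 * extinctionRadius γ D ε))) := by
  obtain ⟨β, hγβ, hβ⟩ := exists_between hγ1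
  filter_upwards [self_mem_nhdsWithin, eventually_extinctionRadius_le_mul_log hγ0 hγβ hD,
    tendsto_log_one_div_nhdsGT_zero.eventually (eventually_mul_exp_neg_lt_mul_exp_neg hβ hC K)]
    with ε hε hradius hlt
  calc K * ε = K * exp (-log (1 / ε)) := by rw [one_div, log_inv, neg_neg, exp_log hε]
    _ < _ := hlt
    _ ≤ _ := by gcongr

end ExtinctionRadius

section ExtinctionCondition

variable (E : Type*) [NormedAddCommGroup E] [InnerProductSpace ℝ E] [FiniteDimensional ℝ E]
  [MeasurableSpace E] [BorelSpace E] [Nontrivial E]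

theorem exists_one_add_mul_exp_le_integral_inv_heatBallMass :
    ∃ C > 0, ∀ l T, 0 < l → l ≤ 2 * T →
      1 + C * exp (-(l + √(2 * l))) ≤
        (∫ s in Ioo 0 T, exp (-s) / heatBallMass E (l / √s)) +
          exp (-T) / heatBallMass E (l / √T) := by
  obtain ⟨C, hC, tail⟩ := exists_heatBallMass_le_one_sub E
  refine ⟨C * exp (-1), by positivity, fun l T hl hlT ↦ ?_⟩
  set τ := C * exp (-(√(2 * l) + 2) ^ 2 / 4) with hτ
  have mass_pos : ∀ s, 0 < s → 0 < heatBallMass E (l / √s) := fun s hs ↦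
    heatBallMass_pos (div_pos hl (sqrt_pos.2 hs))
  have radius_eq : l / √(l / 2) = √(2 * l) := by
    rw [div_eq_iff (by positivity), ← sqrt_mul (by positivity)]
    exact ((sqrt_eq_iff_mul_self_eq_of_pos hl).2 (by ring)).symm
  have inv_ge : 1 + τ ≤ (heatBallMass E (l / √(l / 2)))⁻¹ := by
    rw [← one_div, le_div_iff₀ (mass_pos _ (half_pos hl)), radius_eq]
    calc (1 + τ) * heatBallMass E √(2 * l) ≤ (1 + τ) * (1 - τ) := by
          gcongr
          exact tail _ (sqrt_nonneg _)
      _ ≤ 1 := by linarith [sq_nonneg τ]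
  have gain_eq : C * exp (-1) * exp (-(l + √(2 * l))) = τ * exp (-(l / 2)) := by
    rw [hτ, mul_assoc, mul_assoc, ← exp_add, ← exp_add]
    congr 2
    linear_combination (1 / 4) * sq_sqrt (by positivity : 0 ≤ 2 * l)
  calc 1 + C * exp (-1) * exp (-(l + √(2 * l)))
      ≤ 1 + ((heatBallMass E (l / √(l / 2)))⁻¹ - 1) * exp (-(l / 2)) := by
        rw [gain_eq]
        gcongr
        linarith
    _ ≤ _ := by
        simp only [div_eq_mul_inv (exp _)]
        exact le_integral_exp_neg_mul_add_of_monotoneOn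
          ((monotoneOn_inv_heatBallMass_div_sqrt hl).mono Ioc_subset_Ioi_self)
          (fun s hs ↦ (one_le_inv₀ (mass_pos s hs.1)).2 (heatBallMass_le_one E _))
          (by positivity) (by linarith)

theorem eventually_one_add_mul_lt_integral_inv_heatBallMass {γ D : ℝ} (hγ0 : 0 < γ) (hγ1 : γ < 1)
    (hD : 0 < D) (K : ℝ) :
    ∀ᶠ ε in 𝓝[>] 0, 1 + K * ε <
      (∫ s in Ioo 0 (extinctionTime D ε),
        exp (-s) / heatBallMass E (extinctionRadius γ D ε / √s)) +
        exp (-extinctionTime D ε) /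
          heatBallMass E (extinctionRadius γ D ε / √(extinctionTime D ε)) := by
  obtain ⟨C, hC, lower_bound⟩ := exists_one_add_mul_exp_le_integral_inv_heatBallMass E
  filter_upwards [Ioo_mem_nhdsGT (lt_min one_pos hD),
    eventually_extinctionRadius_le_mul_log hγ0.le hγ1 hD,
    eventually_log_le_two_mul_extinctionTime hD,
    eventually_mul_lt_mul_exp_neg_extinctionRadius hγ0.le hγ1 hD hC K]
    with ε ⟨hε, hεmin⟩ hradius htime hgain
  obtain ⟨hε1, hεD⟩ := lt_min_iff.1 hεmin
  refine (add_lt_add_right hgain 1).trans_le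
    (lower_bound _ _ (extinctionRadius_pos hγ0 hε hε1 hεD) ?_)
  linarith

end ExtinctionCondition

/-- Condition (2.8) of the paper: with `T_ε = ln((δ-θ)/ε)` and
`L_ε = γ √(T_ε ln(1/ε))` (for `0 < γ < 1`), for all small enough `ε` one has
`1 + ε/θ < ∫₀^{T_ε} e^{-s}/A_{L_ε}(s) ds + e^{-T_ε}/A_{L_ε}(T_ε)`. -/
theorem extinction_condition_holds
    (N : ℕ) (hN : 1 ≤ N) (θ δ γ : ℝ) (hθ : 0 < θ) (hδ : θ < δ)
    (hγ0 : 0 < γ) (hγ1 : γ < 1)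
    (A : ℝ → ℝ → ℝ)
    (hA : ∀ l t, 0 < l → 0 < t → A l t =
      (1 / (4 * Real.pi) ^ ((N : ℝ) / 2)) *
        ∫ x in {x : EuclideanSpace ℝ (Fin N) | ‖x‖ < l / Real.sqrt t},
          Real.exp (-‖x‖ ^ 2 / 4)) :
    ∃ ε₀ > (0 : ℝ), ∀ ε, 0 < ε → ε < ε₀ → ε < min 1 (δ - θ) →
      1 + ε / θ <
        (∫ s in Set.Ioo (0 : ℝ) (Real.log ((δ - θ) / ε)),
            Real.exp (-s) /
              A (γ * Real.sqrt (Real.log ((δ - θ) / ε) * Real.log (1 / ε))) s) +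
          Real.exp (-Real.log ((δ - θ) / ε)) /
            A (γ * Real.sqrt (Real.log ((δ - θ) / ε) * Real.log (1 / ε)))
              (Real.log ((δ - θ) / ε)) := by
  have : Nonempty (Fin N) := ⟨⟨0, hN⟩⟩
  have A_eq : ∀ l t, 0 < l → 0 < t → A l t = heatBallMass (EuclideanSpace ℝ (Fin N)) (l / √t) := by
    intro l t hl ht
    rw [hA l t hl ht, heatBallMass, finrank_euclideanSpace_fin]
  obtain ⟨ε₀, hε₀, condition⟩ := mem_nhdsGT_iff_exists_Ioo_subset.1
    (eventually_one_add_mul_lt_integral_inv_heatBallMass (EuclideanSpace ℝ (Fin N)) hγ0 hγ1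
      (sub_pos.2 hδ) θ⁻¹)
  refine ⟨ε₀, hε₀, fun ε hε hεε₀ hεmin ↦ ?_⟩
  obtain ⟨hε1, hεδ⟩ := lt_min_iff.1 hεmin
  have time_pos := extinctionTime_pos hε hεδ
  have radius_pos := extinctionRadius_pos hγ0 hε hε1 hεδ
  change 1 + ε / θ < (∫ s in Ioo 0 (extinctionTime (δ - θ) ε),
    exp (-s) / A (extinctionRadius γ (δ - θ) ε) s) + exp (-extinctionTime (δ - θ) ε) /
      A (extinctionRadius γ (δ - θ) ε) (extinctionTime (δ - θ) ε)
  rw [A_eq _ _ radius_pos time_pos, div_eq_inv_mul ε,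
    setIntegral_congr_fun measurableSet_Ioo fun s hs ↦ by rw [A_eq _ s radius_pos hs.1]]
  exact condition ⟨hε, hεε₀⟩
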